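/- Suppose (V,d) is a finite metric space that is the effective resistance of a graph (V,c). Then det A_y = det M_y' > 0 for every y ∈ V, where A_y(x,z) = 1 if x = y = z and (d(x,y)+d(y,z)-d(x,z))/2 otherwise, and M_y' is the matrix ((d(x,y)+d(y,z)-d(x,z))/2) restricted to (V \ {y})². -/

import Mathlib

def IsMetric {W : Type*} (d : W → W → ℝ) : Prop :=
  (∀ x y, 0 ≤ d x y) ∧ (∀ x y, d x y = 0 ↔ x = y) ∧
  (∀ x y, d x y = d y x) ∧ (∀ x y z, d x z ≤ d x y + d y z)

noncomputable def Mdef {W : Type*} (d : W → W → ℝ) (y x z : W) : ℝ :=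
  (d x y + d y z - d x z) / 2

noncomputable def deg {W : Type*} [Fintype W] (c : W → W → ℝ) (x : W) : ℝ := ∑ y, c x y

def IsWeight {W : Type*} (c : W → W → ℝ) : Prop :=
  (∀ x y, 0 ≤ c x y) ∧ (∀ x y, c x y = c y x) ∧ (∀ x, c x x = 0)

def Conn {W : Type*} (c : W → W → ℝ) : Prop :=
  ∀ x y, Relation.ReflTransGen (fun a b => 0 < c a b) x y

noncomputable def lap {W : Type*} [Fintype W] (c : W → W → ℝ) (φ : W → ℝ) (x : W) : ℝ :=
  φ x - ∑ y, (c x y / deg c x) * φ y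

def IsDirichlet {W : Type*} [Fintype W] [DecidableEq W] (c : W → W → ℝ) (x y : W)
    (φ : W → ℝ) : Prop :=
  (∀ z, lap c φ z =
      (if z = x then 1 / deg c x else 0) - (if z = y then 1 / deg c y else 0)) ∧
  φ y = 0

def IsEffRes {W : Type*} [Fintype W] [DecidableEq W] (c : W → W → ℝ) (R : W → W → ℝ) : Prop :=
  (∀ x, R x x = 0) ∧ ∀ x y, x ≠ y → ∃ φ, IsDirichlet c x y φ ∧ φ x = R x y

noncomputable def Amat {W : Type*} [DecidableEq W] (d : W → W → ℝ) (y : W) : Matrix W W ℝ :=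
  Matrix.of fun x z => if x = y ∧ z = y then 1 else (d x y + d y z - d x z) / 2

noncomputable def Mres {W : Type*} (d : W → W → ℝ) (y : W) :
    Matrix {z : W // z ≠ y} {z : W // z ≠ y} ℝ :=
  Matrix.of fun a b => (d a.1 y + d y b.1 - d a.1 b.1) / 2

noncomputable def bvec {W : Type*} [DecidableEq W] (y : W) : W → ℝ :=
  fun x => if x = y then 0 else 1

/-!
Let `L` be the combinatorial Laplacian of `(V, c)`. If `L φ = δ_x - δ_y`, then pairing with the
analogous potentials and using the symmetry of `L` shows that `d x y = φ x - φ y`, and that the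
column of `M_y'` at `z` is the solution of `L φ = δ_z - δ_y` with `φ y = 0`. Hence `M_y'` is the
inverse of the restriction of `L` to `V \ {y}`. That restriction is positive semidefinite by the
Dirichlet energy formula, so its determinant is nonnegative, and being invertible it has positive
determinant. Finally `A_y` is block triangular with diagonal blocks `1` and `M_y'`.
-/

open scoped Matrix

section

variable {V : Type*} [Fintype V] [DecidableEq V] {c d : V → V → ℝ} {φ ψ : V → ℝ} {x y z w : V}

/-- The combinatorial Laplacian of the weighted graph `(V, c)`: the matrix of `deg c x * Δ`, where
`Δ` is the normalised Laplacian `lap c`. Unlike `Δ` it is symmetric. -/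
noncomputable def lapMatrix (c : V → V → ℝ) : Matrix V V ℝ :=
  Matrix.diagonal (deg c) - Matrix.of c

lemma lapMatrix_mulVec_apply (φ : V → ℝ) (x : V) :
    (lapMatrix c *ᵥ φ) x = ∑ y, c x y * (φ x - φ y) := by
  simp only [lapMatrix, Matrix.sub_mulVec, Pi.sub_apply, Matrix.mulVec_diagonal, deg,
    Finset.sum_mul, mul_sub, Finset.sum_sub_distrib]
  rfl

lemma lapMatrix_mulVec_apply_eq_deg_mul_lap (hx : deg c x ≠ 0) (φ : V → ℝ) :
    (lapMatrix c *ᵥ φ) x = deg c x * lap c φ x := by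
  have h_neighbour (y : V) : deg c x * (c x y / deg c x * φ y) = c x y * φ y := by field_simp
  simp only [lap, mul_sub (deg c x), Finset.mul_sum, h_neighbour]
  simp only [lapMatrix_mulVec_apply, mul_sub, Finset.sum_sub_distrib, ← Finset.sum_mul, deg]

lemma isSymm_lapMatrix (hc : ∀ x y, c x y = c y x) : (lapMatrix c).IsSymm :=
  (Matrix.isSymm_diagonal _).sub (Matrix.IsSymm.ext fun x y => hc y x)

lemma dotProduct_lapMatrix_mulVec_self (hc : ∀ x y, c x y = c y x) (φ : V → ℝ) :
    φ ⬝ᵥ lapMatrix c *ᵥ φ = (∑ x, ∑ y, c x y * (φ x - φ y) ^ 2) / 2 := by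
  have h_expand : φ ⬝ᵥ lapMatrix c *ᵥ φ = ∑ x, ∑ y, c x y * (φ x * (φ x - φ y)) := by
    simp only [dotProduct, lapMatrix_mulVec_apply, Finset.mul_sum, mul_left_comm]
  have h_swap : φ ⬝ᵥ lapMatrix c *ᵥ φ = ∑ x, ∑ y, c x y * (φ y * (φ y - φ x)) := by
    rw [h_expand, Finset.sum_comm]
    simp only [hc]
  have h_add : ∑ x, ∑ y, c x y * (φ x - φ y) ^ 2 =
      φ ⬝ᵥ lapMatrix c *ᵥ φ + φ ⬝ᵥ lapMatrix c *ᵥ φ := by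
    nth_rewrite 1 [h_expand]
    rw [h_swap]
    simp only [← Finset.sum_add_distrib]
    exact Finset.sum_congr rfl fun x _ => Finset.sum_congr rfl fun y _ => by ring
  rw [h_add, add_self_div_two]

lemma posSemidef_lapMatrix (hc₀ : ∀ x y, 0 ≤ c x y) (hc : ∀ x y, c x y = c y x) :
    (lapMatrix c).PosSemidef := by
  refine .of_dotProduct_mulVec_nonneg (isSymm_lapMatrix hc) fun φ => ?_
  rw [star_trivial, dotProduct_lapMatrix_mulVec_self hc]
  exact div_nonneg (Finset.sum_nonneg fun x _ => Finset.sum_nonneg fun y _ =>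
    mul_nonneg (hc₀ x y) (sq_nonneg _)) zero_le_two

/-- `φ` is a voltage on the network `(V, c)` that drives a unit current from `x` to `y`. It is not
normalised by `φ y = 0`, so that such functions can be added and subtracted. -/
def IsUnitPotential (c : V → V → ℝ) (x y : V) (φ : V → ℝ) : Prop :=
  lapMatrix c *ᵥ φ = Pi.single x 1 - Pi.single y 1

namespace IsUnitPotential

lemma zero (c : V → V → ℝ) (x : V) : IsUnitPotential c x x 0 := by
  rw [IsUnitPotential, Matrix.mulVec_zero, sub_self]

lemma neg (hφ : IsUnitPotential c x y φ) : IsUnitPotential c y x (-φ) := by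
  rw [IsUnitPotential, Matrix.mulVec_neg, hφ, neg_sub]

lemma sub (hφ : IsUnitPotential c x y φ) (hψ : IsUnitPotential c z y ψ) :
    IsUnitPotential c x z (φ - ψ) := by
  rw [IsUnitPotential, Matrix.mulVec_sub, hφ, hψ, sub_sub_sub_cancel_right]

lemma dotProduct_lapMatrix_mulVec (hφ : IsUnitPotential c x y φ) (ψ : V → ℝ) :
    ψ ⬝ᵥ lapMatrix c *ᵥ φ = ψ x - ψ y := by
  rw [hφ, dotProduct_sub, dotProduct_single_one, dotProduct_single_one]

lemma reciprocity (hc : ∀ x y, c x y = c y x) (hφ : IsUnitPotential c x y φ)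
    (hψ : IsUnitPotential c z w ψ) : φ z - φ w = ψ x - ψ y := by
  rw [← hφ.dotProduct_lapMatrix_mulVec, ← hψ.dotProduct_lapMatrix_mulVec,
    Matrix.dotProduct_mulVec, ← Matrix.mulVec_transpose, isSymm_lapMatrix hc, dotProduct_comm]

end IsUnitPotential

lemma IsDirichlet.isUnitPotential (hdeg : ∀ x, deg c x ≠ 0) (h : IsDirichlet c x y φ) :
    IsUnitPotential c x y φ := by
  have h_source (u v : V) :
      deg c u * (if u = v then 1 / deg c v else 0) = (Pi.single v 1 : V → ℝ) u := by
    rcases eq_or_ne u v with rfl | huv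
    · simp [hdeg u]
    · simp [huv]
  funext u
  rw [lapMatrix_mulVec_apply_eq_deg_mul_lap (hdeg u), h.1 u, mul_sub, h_source, h_source,
    Pi.sub_apply]

namespace IsEffRes

lemma exists_isUnitPotential (hdeg : ∀ x, deg c x ≠ 0) (hd : IsEffRes c d) (x y : V) :
    ∃ φ, IsUnitPotential c x y φ ∧ φ y = 0 ∧ φ x = d x y := by
  rcases eq_or_ne x y with rfl | hxy
  · exact ⟨0, .zero c x, rfl, (hd.1 x).symm⟩
  · obtain ⟨φ, hφ, hφx⟩ := hd.2 x y hxy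
    exact ⟨φ, hφ.isUnitPotential hdeg, hφ.2, hφx⟩

lemma eq_sub_of_isUnitPotential (hc : ∀ x y, c x y = c y x) (hdeg : ∀ x, deg c x ≠ 0)
    (hd : IsEffRes c d) (hφ : IsUnitPotential c x y φ) : d x y = φ x - φ y := by
  obtain ⟨ψ, hψ, hψy, hψx⟩ := hd.exists_isUnitPotential hdeg x y
  rw [hφ.reciprocity hc hψ, hψy, hψx, sub_zero]

lemma symm (hc : ∀ x y, c x y = c y x) (hdeg : ∀ x, deg c x ≠ 0) (hd : IsEffRes c d)
    (x y : V) : d x y = d y x := by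
  obtain ⟨φ, hφ, -⟩ := hd.exists_isUnitPotential hdeg x y
  rw [hd.eq_sub_of_isUnitPotential hc hdeg hφ, hd.eq_sub_of_isUnitPotential hc hdeg hφ.neg,
    Pi.neg_apply, Pi.neg_apply, neg_sub_neg]

lemma Mdef_eq_sub (hc : ∀ x y, c x y = c y x) (hdeg : ∀ x, deg c x ≠ 0) (hd : IsEffRes c d)
    (hφ : IsUnitPotential c z y φ) (x : V) : Mdef d y x z = φ x - φ y := by
  obtain ⟨ψ, hψ, -⟩ := hd.exists_isUnitPotential hdeg x y
  have hxy : d x y = ψ x - ψ y := hd.eq_sub_of_isUnitPotential hc hdeg hψ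
  have hyz : d y z = φ z - φ y :=
    (hd.symm hc hdeg y z).trans (hd.eq_sub_of_isUnitPotential hc hdeg hφ)
  have hxz : d x z = (ψ x - φ x) - (ψ z - φ z) :=
    hd.eq_sub_of_isUnitPotential hc hdeg (hψ.sub hφ)
  have h_recip : φ x - φ y = ψ z - ψ y := hφ.reciprocity hc hψ
  rw [Mdef]
  linarith

lemma lapMatrix_submatrix_mul_Mres (hc : ∀ x y, c x y = c y x) (hdeg : ∀ x, deg c x ≠ 0)
    (hd : IsEffRes c d) (y : V) :
    (lapMatrix c).submatrix (Subtype.val : {z // z ≠ y} → V) Subtype.val * Mres d y = 1 := by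
  ext a b
  obtain ⟨φ, hφ, hφy, -⟩ := hd.exists_isUnitPotential hdeg b y
  have h_column (k : {z // z ≠ y}) : Mres d y k b = φ k := by
    rw [← sub_zero (φ k), ← hφy]
    exact hd.Mdef_eq_sub hc hdeg hφ k
  calc ∑ k : {z // z ≠ y}, lapMatrix c a k * Mres d y k b
      = ∑ k : {z // z ≠ y}, lapMatrix c a k * φ k := by simp only [h_column]
    _ = ∑ k, lapMatrix c a k * φ k := by
        rw [Fintype.sum_eq_add_sum_subtype_ne _ y, hφy, mul_zero, zero_add]
    _ = (Pi.single (b : V) 1 - Pi.single y 1 : V → ℝ) a := congrFun hφ a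
    _ = (1 : Matrix {z // z ≠ y} {z // z ≠ y} ℝ) a b := by
        simp [Pi.single_apply, Matrix.one_apply, a.2, Subtype.ext_iff]

lemma det_Mres_pos (hc₀ : ∀ x y, 0 ≤ c x y) (hc : ∀ x y, c x y = c y x)
    (hdeg : ∀ x, deg c x ≠ 0) (hd : IsEffRes c d) (y : V) : 0 < (Mres d y).det := by
  let L : Matrix {z // z ≠ y} {z // z ≠ y} ℝ := (lapMatrix c).submatrix Subtype.val Subtype.val
  have h_mul : L.det * (Mres d y).det = 1 := by
    rw [← Matrix.det_mul, hd.lapMatrix_submatrix_mul_Mres hc hdeg y, Matrix.det_one]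
  have h_nonneg : 0 ≤ L.det := ((posSemidef_lapMatrix hc₀ hc).submatrix _).det_nonneg
  exact pos_of_mul_pos_right (h_mul ▸ one_pos) h_nonneg

end IsEffRes

lemma det_Amat_eq_det_Mres (hy : d y y = 0) : (Amat d y).det = (Mres d y).det := by
  have h_rest : (Amat d y).toSquareBlockProp (· ≠ y) = Mres d y := by
    ext ⟨a, ha⟩ b
    simp [Matrix.toSquareBlockProp, Amat, Mres, ha]
  have h_corner : (Amat d y).toSquareBlockProp (¬ · ≠ y) = 1 := by
    ext ⟨a, ha⟩ ⟨b, hb⟩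
    obtain rfl := not_not.1 ha
    obtain rfl := not_not.1 hb
    simp [Matrix.toSquareBlockProp, Amat]
  have h_row : ∀ x, ¬ x ≠ y → ∀ z, z ≠ y → Amat d y x z = 0 := by
    intro x hx z hz
    obtain rfl := not_not.1 hx
    simp [Amat, hz, hy]
  rw [Matrix.twoBlockTriangular_det _ _ h_row, h_rest, h_corner, Matrix.det_one, mul_one]

end

theorem stmt13 {V : Type*} [Fintype V] [DecidableEq V] (d : V → V → ℝ) (hd : IsMetric d)
    (c : V → V → ℝ) (hw : IsWeight c) (hconn : Conn c) (hdeg : ∀ x, 0 < deg c x)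
    (heff : IsEffRes c d) :
    ∀ y : V, (Amat d y).det = (Mres d y).det ∧ 0 < (Amat d y).det := by
  intro y
  have h_det : (Amat d y).det = (Mres d y).det := det_Amat_eq_det_Mres (heff.1 y)
  refine ⟨h_det, h_det ▸ ?_⟩
  exact heff.det_Mres_pos hw.1 hw.2.1 (fun x => (hdeg x).ne') y
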